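/- arXiv:0708.0048 — 3 statements merged into one kernel-verified Lean document; each statement's English description precedes it below -/
import Mathlib

section
/- Let α ∈ (0,1) be irrational with continued fraction expansion α = [a_1, a_2, …]. For every k ≥ 0, the quantity t_k equals either a_1 + 1 or a_1; more precisely, t_k = a_1 + 1 if {r_k α} < f_1 = 1 − a_1 α, and t_k = a_1 if {r_k α} > f_1. -/
open Filter Finset

noncomputable section

/-- The Gauss map `G(x) = {1/x}` (with `G(0) = 0`, since `0⁻¹ = 0` in Lean). -/
def gaussMap (x : ℝ) : ℝ := Int.fract x⁻¹

/-- `α_m = G^m(α)`. -/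
def gaussIter (α : ℝ) (m : ℕ) : ℝ := gaussMap^[m] α

/-- The `h`-th partial quotient `a_h` of `α` (meaningful for `h ≥ 1`):
`a_h = ⌊(G^{h-1} α)⁻¹⌋`. -/
def pq (α : ℝ) (h : ℕ) : ℕ := ⌊(gaussIter α (h - 1))⁻¹⌋₊

/-- Denominators `q_n` of the convergents of `α`:
`q_0 = 1`, `q_1 = a_1`, `q_{n+2} = a_{n+2} q_{n+1} + q_n`. -/
def qden (α : ℝ) : ℕ → ℕ
  | 0 => 1
  | 1 => pq α 1
  | (n + 2) => pq α (n + 2) * qden α (n + 1) + qden α n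

/-- Numerators `p_n` of the convergents of `α`:
`p_0 = 0`, `p_1 = 1`, `p_{n+2} = a_{n+2} p_{n+1} + p_n`. -/
def pnum (α : ℝ) : ℕ → ℕ
  | 0 => 0
  | 1 => 1
  | (n + 2) => pq α (n + 2) * pnum α (n + 1) + pnum α n

/-- `f_n = (-1)^n (q_n α - p_n)`. -/
def fseq (α : ℝ) (n : ℕ) : ℝ := (-1) ^ n * ((qden α n : ℝ) * α - (pnum α n : ℝ))

/-- `r_k = min {r ≥ 0 : ⌊r α⌋ = k}`. -/
def rmin (α : ℝ) (k : ℕ) : ℕ := sInf {r : ℕ | ⌊(r : ℝ) * α⌋ = (k : ℤ)}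

/-- `t_k = #{r ≥ 0 : ⌊r α⌋ = k}`. -/
def tcount (α : ℝ) (k : ℕ) : ℕ := Set.ncard {r : ℕ | ⌊(r : ℝ) * α⌋ = (k : ℤ)}

/-- `(k_j)_{j ≥ 0}`: the increasing enumeration of `{k : t_k = a_1 + 1}`. -/
def kseq (α : ℝ) (j : ℕ) : ℕ := Nat.nth (fun k => tcount α k = pq α 1 + 1) j

/-- The gaps `g_j = r_{k_j} - r_{k_{j-1}}` (for `j ≥ 1`). -/
def gseq (γ : ℝ) (j : ℕ) : ℕ := rmin γ (kseq γ j) - rmin γ (kseq γ (j - 1))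

/-- `(j_h)_{h ≥ 0}`: the increasing enumeration of those `j ≥ 1` with
`g_j = q_2 + q_1`. -/
def jbig (γ : ℝ) (h : ℕ) : ℕ :=
  Nat.nth (fun j => 1 ≤ j ∧ gseq γ j = qden γ 2 + qden γ 1) h

/-- `ᾱ_1 = G(α)/(1 - G(α))`. -/
def abar (α : ℝ) : ℝ := gaussIter α 1 / (1 - gaussIter α 1)

/-- The Ostrowski representation `r = ∑_{h=0}^N c_h q_h` with `0 ≤ c_h ≤ a_{h+1}`,
`c_{h-1} = 0` whenever `c_h = a_{h+1}`, and `c_N > 0`; `N = ord r`. -/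
def IsOstrowski (α : ℝ) (r N : ℕ) (c : ℕ → ℕ) : Prop :=
  r = ∑ h ∈ Finset.range (N + 1), c h * qden α h ∧
  (∀ h, c h ≤ pq α (h + 1)) ∧
  (∀ h, c (h + 1) = pq α (h + 2) → c h = 0) ∧
  0 < c N ∧ ∀ h, N < h → c h = 0

/-- The order `ord r` of a positive integer `r`. -/
def ordOst (α : ℝ) (r : ℕ) : ℕ := sInf {N | ∃ c, IsOstrowski α r N c}

/-- `s(y) = 2 χ_{[0,1/2)}({y}) - 1`. -/
def sfun (y : ℝ) : ℝ := if Int.fract y < 1 / 2 then 1 else -1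

/-- `S_n(α, β) = ∑_{r=0}^n s({r α + β})`. -/
def Sgen (α β : ℝ) (n : ℕ) : ℝ := ∑ r ∈ Finset.range (n + 1), sfun ((r : ℝ) * α + β)

/-- `S_n(α) = S_n(α, 0)`. -/
def Ssum (α : ℝ) (n : ℕ) : ℝ := Sgen α 0 n

/-- `max_{0 ≤ n ≤ r} S_n(α)`. -/
def maxS (α : ℝ) (r : ℕ) : ℝ := sSup (Ssum α '' Set.Iic r)

/-- `min_{0 ≤ n ≤ r} S_n(α)`. -/
def minS (α : ℝ) (r : ℕ) : ℝ := sInf (Ssum α '' Set.Iic r)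

/-- `d_n(α, β) = ∑_{r=0}^{n-1} χ_{[0,β)}({r α}) - β n`. -/
def ddisc (α β : ℝ) (n : ℕ) : ℝ :=
  (∑ r ∈ Finset.range n, if Int.fract ((r : ℝ) * α) < β then (1 : ℝ) else 0) - β * n

/-- `j(r) = max {j + sgn R₁ - 1, 0}` from the decomposition `r = r_{k_j} + R₁ q₁ + R₀`. -/
def jfun (j R1 : ℕ) : ℕ := if R1 = 0 then j - 1 else j

/-- `i(r) = k_j - j + max {R₁ - 1, 0}` from the decomposition `r = r_{k_j} + R₁ q₁ + R₀`. -/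
def ifun (α : ℝ) (j R1 : ℕ) : ℕ := kseq α j - j + (R1 - 1)

/-- `S̃(r)` from the decomposition `r = r_{k_j} + R₁ q₁ + R₀`. -/
def Stil (α : ℝ) (r R1 R0 : ℕ) : ℝ :=
  if R0 = 0 then (if R1 = 0 then sfun ((r : ℝ) * α) else 0)
  else if R1 = 0 then ∑ i ∈ Finset.Icc (r - R0) r, sfun ((i : ℝ) * α)
  else ∑ i ∈ Finset.Icc (r - R0 + 1) r, sfun ((i : ℝ) * α)

/-- `sup_{β ∈ (0,1)} |d_n(α, β)| = n D_n^*(α)`. -/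
def nDsup (α : ℝ) (n : ℕ) : ℝ := sSup ((fun β => |ddisc α β n|) '' Set.Ioo (0 : ℝ) 1)

/-- The discrepancy `D_n^*(α) = sup_{β ∈ (0,1)} |d_n(α, β)| / n`. -/
def Dstar (α : ℝ) (n : ℕ) : ℝ :=
  sSup ((fun β => |ddisc α β n| / (n : ℝ)) '' Set.Ioo (0 : ℝ) 1)

/-!
For `α > 0` the condition `⌊r α⌋ = k` says `k / α ≤ r < (k + 1) / α`, so the `r` counted by `t_k`
form the interval `[⌈k / α⌉, ⌈(k + 1) / α⌉)`. If `α ≤ 1`, this interval is nonempty and starts at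
`r_k`; measuring its length from `r_k` gives `t_k = ⌈(1 - δ) / α⌉` with
`δ = {r_k α} = r_k α - k ∈ [0, α)`. This ceiling is `⌊1 / α⌋ + 1` or `⌊1 / α⌋` according to
whether `δ < 1 - ⌊1 / α⌋ α` or not.
-/

section Floor

variable {K : Type*} [Field K] [LinearOrder K] [IsStrictOrderedRing K] {x : K}

lemma setOf_floor_natCast_mul_eq [FloorRing K] (hx : 0 < x) (k : ℕ) :
    {n : ℕ | ⌊(n : K) * x⌋ = (k : ℤ)} = Set.Ico ⌈(k : K) / x⌉₊ ⌈((k : K) + 1) / x⌉₊ := by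
  ext n
  simp only [Set.mem_ofPred_eq, Set.mem_Ico, Int.floor_eq_iff, Int.cast_natCast, Nat.ceil_le,
    Nat.lt_ceil, div_le_iff₀ hx, lt_div_iff₀ hx]

variable [FloorSemiring K]

lemma ceil_div_lt_ceil_add_one_div (hx : 0 < x) (hx1 : x ≤ 1) (k : ℕ) :
    ⌈(k : K) / x⌉₊ < ⌈((k : K) + 1) / x⌉₊ := by
  rw [Nat.lt_ceil]
  calc (⌈(k : K) / x⌉₊ : K) < k / x + 1 := Nat.ceil_lt_add_one (by positivity)
    _ ≤ k / x + 1 / x := by gcongr; exact one_le_one_div hx hx1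
    _ = (k + 1) / x := (add_div _ _ _).symm

lemma ceil_one_sub_div_of_lt {δ : K} (hx : 0 < x) (hδ : 0 ≤ δ) (h : δ < 1 - ⌊x⁻¹⌋₊ * x) :
    ⌈(1 - δ) / x⌉₊ = ⌊x⁻¹⌋₊ + 1 := by
  apply le_antisymm
  · rw [Nat.ceil_le, Nat.cast_add_one]
    calc (1 - δ) / x ≤ 1 / x := by gcongr; exact sub_le_self 1 hδ
      _ = x⁻¹ := one_div x
      _ ≤ ⌊x⁻¹⌋₊ + 1 := (Nat.lt_floor_add_one _).le
  · rw [Nat.add_one_le_ceil_iff, lt_div_iff₀ hx]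
    exact lt_sub_comm.mp h

lemma ceil_one_sub_div_of_le {δ : K} (hx : 0 < x) (hδ : δ < x) (h : 1 - ⌊x⁻¹⌋₊ * x ≤ δ) :
    ⌈(1 - δ) / x⌉₊ = ⌊x⁻¹⌋₊ := by
  apply le_antisymm
  · rw [Nat.ceil_le, div_le_iff₀ hx]
    exact sub_le_comm.mp h
  · rw [← Nat.lt_add_one_iff, ← Nat.cast_lt (α := K), Nat.cast_add_one]
    calc (⌊x⁻¹⌋₊ : K) ≤ x⁻¹ := Nat.floor_le (inv_nonneg.mpr hx.le)
      _ = (1 - δ) / x + δ / x := by rw [← add_div, sub_add_cancel, one_div]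
      _ < (1 - δ) / x + 1 := by gcongr; exact (div_lt_one hx).mpr hδ
      _ ≤ ⌈(1 - δ) / x⌉₊ + 1 := by gcongr; exact Nat.le_ceil _

end Floor

lemma pq_one (α : ℝ) : pq α 1 = ⌊α⁻¹⌋₊ := rfl

lemma fseq_one (α : ℝ) : fseq α 1 = 1 - ⌊α⁻¹⌋₊ * α := by
  simp [fseq, qden, pnum, pq_one]

section Counting

variable {α : ℝ}

lemma tcount_eq_ceil_sub_ceil (hα : 0 < α) (k : ℕ) :
    tcount α k = ⌈((k : ℝ) + 1) / α⌉₊ - ⌈(k : ℝ) / α⌉₊ := by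
  rw [tcount, setOf_floor_natCast_mul_eq hα, Set.ncard_Ico_nat]

lemma rmin_eq_ceil (hα : 0 < α) (hα1 : α ≤ 1) (k : ℕ) : rmin α k = ⌈(k : ℝ) / α⌉₊ := by
  rw [rmin, setOf_floor_natCast_mul_eq hα, csInf_Ico (ceil_div_lt_ceil_add_one_div hα hα1 k)]

lemma floor_rmin_mul (hα : 0 < α) (hα1 : α ≤ 1) (k : ℕ) : ⌊(rmin α k : ℝ) * α⌋ = (k : ℤ) := by
  have hmem : rmin α k ∈ {r : ℕ | ⌊(r : ℝ) * α⌋ = (k : ℤ)} := by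
    rw [setOf_floor_natCast_mul_eq hα, rmin_eq_ceil hα hα1]
    exact Set.left_mem_Ico.mpr (ceil_div_lt_ceil_add_one_div hα hα1 k)
  exact hmem

lemma fract_rmin_mul (hα : 0 < α) (hα1 : α ≤ 1) (k : ℕ) :
    Int.fract ((rmin α k : ℝ) * α) = rmin α k * α - k := by
  rw [Int.fract, floor_rmin_mul hα hα1, Int.cast_natCast]

lemma fract_rmin_mul_lt (hα : 0 < α) (hα1 : α ≤ 1) (k : ℕ) :
    Int.fract ((rmin α k : ℝ) * α) < α := by
  have hlt : (rmin α k : ℝ) < k / α + 1 := by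
    rw [rmin_eq_ceil hα hα1]
    exact Nat.ceil_lt_add_one (by positivity)
  calc Int.fract ((rmin α k : ℝ) * α) = rmin α k * α - k := fract_rmin_mul hα hα1 k
    _ < (k / α + 1) * α - k := by gcongr
    _ = α := by field_simp; ring

lemma tcount_eq_ceil (hα : 0 < α) (hα1 : α ≤ 1) (k : ℕ) :
    tcount α k = ⌈(1 - Int.fract ((rmin α k : ℝ) * α)) / α⌉₊ := by
  have hshift : (1 - Int.fract ((rmin α k : ℝ) * α)) / α = ((k : ℝ) + 1) / α - rmin α k := by
    rw [fract_rmin_mul hα hα1]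
    field_simp
    ring
  rw [hshift, Nat.ceil_sub_natCast, tcount_eq_ceil_sub_ceil hα, rmin_eq_ceil hα hα1]

end Counting

theorem tcount_eq_general (α : ℝ) (hα : 0 < α) (hα1 : α ≤ 1) (k : ℕ) :
    tcount α k =
      if Int.fract ((rmin α k : ℝ) * α) < fseq α 1 then pq α 1 + 1 else pq α 1 := by
  rw [tcount_eq_ceil hα hα1, fseq_one, pq_one]
  split_ifs with h
  · exact ceil_one_sub_div_of_lt hα (Int.fract_nonneg _) h
  · exact ceil_one_sub_div_of_le hα (fract_rmin_mul_lt hα hα1 k) (not_lt.mp h)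

/-- for every `k ≥ 0`, `t_k ∈ {a_1, a_1 + 1}`; more precisely
`t_k = a_1 + 1` if `{r_k α} < f_1 = 1 - a_1 α` and `t_k = a_1` if `{r_k α} > f_1`. -/
theorem tcount_eq (α : ℝ) (hirr : Irrational α) (h0 : 0 < α) (h1 : α < 1) (k : ℕ) :
    (tcount α k = pq α 1 + 1 ∨ tcount α k = pq α 1) ∧
    (Int.fract ((rmin α k : ℝ) * α) < fseq α 1 → tcount α k = pq α 1 + 1) ∧
    (fseq α 1 < Int.fract ((rmin α k : ℝ) * α) → tcount α k = pq α 1) := by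
  rw [tcount_eq_general α h0 h1.le k]
  exact ⟨ite_eq_or_eq _ _ _, fun h => if_pos h, fun h => if_neg h.not_gt⟩
end
end

section
/- Let α ∈ (0,1) be irrational and m ≥ 0. Let (j_h^{(m)})_{h≥0} be the increasing enumeration of the indices j ≥ 1 with g_j^{(m)} = q_2^{(m)} + q_1^{(m)}. Then j_0^{(m)} = a_{m+3} + 1 and j_h^{(m)} − j_{h−1}^{(m)} = t_h^{(m+2)} for all h ≥ 1. -/
open Filter Finset

noncomputable section

/-!
For `0 < s`, the maps `n ↦ ⌈n / s⌉` and `j ↦ ⌊j s⌋` on `ℕ` form a Galois connection, so each takes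
as values exactly the places where the other jumps. Write `y = G(x)`, `z = G(y)`, so that
`x⁻¹ = a₁ + y` and `y⁻¹ = a₂ + z`. Then `r_k = ⌈k / x⌉ = a₁ k + ⌈k y⌉`, so `t_k = a₁ + 1` exactly
when `⌈k y⌉` jumps after `k`, that is, when `k` is a value of `j ↦ ⌊j / y⌋ = a₂ j + ⌊j z⌋`, which
is therefore `k_j`. Consequently `r_{k_j} = a₁ k_j + j`, and `g_j = q₂ + q₁` exactly when `⌊j z⌋`
jumps on reaching `j`, that is, when `j = ⌈n / z⌉` for some `n ≥ 1`. Hence `j_h` is `r_{h+1}` for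
the angle `z`, and the differences of consecutive `r_h` are the `t_h`.
-/

theorem nth_eq_of_strictMono {p : ℕ → Prop} {f : ℕ → ℕ} (hf : StrictMono f)
    (hp : ∀ k, p k ↔ k ∈ Set.range f) (n : ℕ) : Nat.nth p n = f n := by
  have hinf : (Set.ofPred p).Infinite := by
    rw [show Set.ofPred p = Set.range f from Set.ext hp]
    exact Set.infinite_range_of_injective hf.injective
  have htrue : (fun i ↦ p (f i)) = fun _ ↦ True := funext fun i ↦ eq_true ((hp _).2 ⟨i, rfl⟩)
  rw [← Nat.nth_comp_of_strictMono hf (fun k ↦ (hp k).1) fun h ↦ absurd h hinf, htrue, Nat.nth_true]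

section GaloisConnection

variable {β γ : Type*} {l : β → γ} {u : γ → β}

theorem l_u_eq_of_injective [PartialOrder β] [Preorder γ] (gc : GaloisConnection l u)
    (hu : u.Injective) (c : γ) : l (u c) = c :=
  hu (gc.u_l_u_eq_u c)

variable [LinearOrder β] [LinearOrder γ]

theorem l_lt_l_iff_mem_range_u (gc : GaloisConnection l u) {a b : β} (hab : a ⋖ b) :
    l a < l b ↔ a ∈ Set.range u := by
  constructor
  · intro h
    exact ⟨l a, le_antisymm (hab.le_of_lt (gc.lt_iff_lt.1 h)) (gc.le_u_l a)⟩
  · rintro ⟨c, rfl⟩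
    exact (gc.l_u_le c).trans_lt (gc.lt_iff_lt.2 hab.lt)

theorem u_lt_u_iff_mem_range_l (gc : GaloisConnection l u) {a b : γ} (hab : a ⋖ b) :
    u a < u b ↔ b ∈ Set.range l :=
  l_lt_l_iff_mem_range_u gc.dual hab.toDual

end GaloisConnection

section FloorCeil

variable {R : Type*} [Semiring R] [LinearOrder R] [IsStrictOrderedRing R] [FloorSemiring R] {s : R}

theorem strictMono_ceil_mul (hs : 1 ≤ s) : StrictMono fun n : ℕ ↦ ⌈(n : R) * s⌉₊ := by
  refine strictMono_nat_of_lt_succ fun n ↦ Nat.add_one_le_iff.1 ?_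
  rw [← Nat.ceil_add_one (by positivity), Nat.cast_add_one, add_one_mul]
  gcongr

theorem strictMono_floor_mul (hs : 1 ≤ s) : StrictMono fun n : ℕ ↦ ⌊(n : R) * s⌋₊ := by
  refine strictMono_nat_of_lt_succ fun n ↦ Nat.add_one_le_iff.1 ?_
  rw [← Nat.floor_add_one (by positivity), Nat.cast_add_one, add_one_mul]
  gcongr

theorem ceil_succ_mul_le (hs0 : 0 ≤ s) (hs1 : s ≤ 1) (n : ℕ) :
    ⌈((n + 1 : ℕ) : R) * s⌉₊ ≤ ⌈(n : R) * s⌉₊ + 1 := by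
  rw [← Nat.ceil_add_one (by positivity), Nat.cast_add_one, add_one_mul]
  gcongr

theorem floor_succ_mul_le (hs0 : 0 ≤ s) (hs1 : s ≤ 1) (n : ℕ) :
    ⌊((n + 1 : ℕ) : R) * s⌋₊ ≤ ⌊(n : R) * s⌋₊ + 1 := by
  rw [← Nat.floor_add_one (by positivity), Nat.cast_add_one, add_one_mul]
  gcongr

end FloorCeil

section FloorCeilGaloisConnection

variable {K : Type*} [Field K] [LinearOrder K] [IsStrictOrderedRing K] [FloorSemiring K] {s : K}

theorem gc_ceil_mul_inv_floor_mul (hs : 0 < s) :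
    GaloisConnection (fun n : ℕ ↦ ⌈(n : K) * s⁻¹⌉₊) (fun j : ℕ ↦ ⌊(j : K) * s⌋₊) := fun n j ↦ by
  rw [Nat.ceil_le, Nat.le_floor_iff (by positivity), mul_inv_le_iff₀ hs]

theorem gc_ceil_mul_floor_mul_inv (hs : 0 < s) :
    GaloisConnection (fun n : ℕ ↦ ⌈(n : K) * s⌉₊) (fun j : ℕ ↦ ⌊(j : K) * s⁻¹⌋₊) := by
  simpa only [inv_inv] using gc_ceil_mul_inv_floor_mul (inv_pos.2 hs)

end FloorCeilGaloisConnection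

section GaussMap

variable {α x : ℝ}

theorem gaussMap_zero : gaussMap 0 = 0 := by simp [gaussMap]

theorem gaussMap_nonneg (x : ℝ) : 0 ≤ gaussMap x := Int.fract_nonneg _

theorem gaussMap_lt_one (x : ℝ) : gaussMap x < 1 := Int.fract_lt_one _

theorem pos_of_gaussMap_pos (hx : 0 ≤ x) (h : 0 < gaussMap x) : 0 < x :=
  hx.lt_of_ne' fun h0 ↦ by simp [h0, gaussMap_zero] at h

theorem irrational_gaussMap (hx : Irrational x) : Irrational (gaussMap x) :=
  hx.inv.sub_intCast _

theorem gaussIter_succ (α : ℝ) (n : ℕ) : gaussIter α (n + 1) = gaussMap (gaussIter α n) :=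
  Function.iterate_succ_apply' gaussMap n α

theorem gaussIter_nonneg (h0 : 0 ≤ α) (n : ℕ) : 0 ≤ gaussIter α n := by
  cases n with
  | zero => exact h0
  | succ n => exact gaussIter_succ α n ▸ gaussMap_nonneg _

theorem gaussIter_lt_one (h1 : α < 1) (n : ℕ) : gaussIter α n < 1 := by
  cases n with
  | zero => exact h1
  | succ n => exact gaussIter_succ α n ▸ gaussMap_lt_one _

theorem gaussIter_pos_of_le (h0 : 0 ≤ α) {m n : ℕ} (hn : gaussIter α n ≠ 0) (hmn : m ≤ n) :
    0 < gaussIter α m := by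
  refine (gaussIter_nonneg h0 m).lt_of_ne' fun hm ↦ hn ?_
  obtain ⟨k, rfl⟩ := Nat.exists_eq_add_of_le' hmn
  rw [gaussIter, Function.iterate_add_apply, show gaussMap^[m] α = 0 from hm]
  exact Function.iterate_fixed gaussMap_zero k

theorem irrational_gaussIter (hα : Irrational α) (n : ℕ) : Irrational (gaussIter α n) := by
  induction n with
  | zero => exact hα
  | succ n ih => exact gaussIter_succ α n ▸ irrational_gaussMap ih

theorem pq_succ (α : ℝ) (n : ℕ) : pq α (n + 1) = pq (gaussIter α n) 1 := rfl

theorem pq_one_pos (h0 : 0 < x) (h1 : x ≤ 1) : 0 < pq x 1 :=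
  Nat.floor_pos.2 ((one_le_inv₀ h0).2 h1)

theorem inv_eq_pq_add_gaussMap (hx : 0 ≤ x) : x⁻¹ = pq x 1 + gaussMap x := by
  have hfloor : (pq x 1 : ℝ) = ⌊x⁻¹⌋ := natCast_floor_eq_intCast_floor (inv_nonneg.2 hx)
  rw [hfloor, gaussMap, Int.floor_add_fract]

theorem ceil_mul_inv (hx : 0 ≤ x) (k : ℕ) :
    ⌈(k : ℝ) * x⁻¹⌉₊ = pq x 1 * k + ⌈(k : ℝ) * gaussMap x⌉₊ := by
  have hy := gaussMap_nonneg x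
  rw [inv_eq_pq_add_gaussMap hx, add_comm (pq x 1 * k), ← Nat.ceil_add_natCast (by positivity)]
  push_cast
  ring_nf

theorem floor_mul_inv (hx : 0 ≤ x) (j : ℕ) :
    ⌊(j : ℝ) * x⁻¹⌋₊ = pq x 1 * j + ⌊(j : ℝ) * gaussMap x⌋₊ := by
  have hy := gaussMap_nonneg x
  rw [inv_eq_pq_add_gaussMap hx, add_comm (pq x 1 * j), ← Nat.floor_add_natCast (by positivity)]
  push_cast
  ring_nf

end GaussMap

section FloorFibres

variable {x : ℝ}

theorem setOf_floor_mul_eq_Ico (h0 : 0 < x) (k : ℕ) :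
    {r : ℕ | ⌊(r : ℝ) * x⌋ = (k : ℤ)} = Set.Ico ⌈(k : ℝ) * x⁻¹⌉₊ ⌈((k + 1 : ℕ) : ℝ) * x⁻¹⌉₊ := by
  ext r
  simp only [Set.mem_ofPred_eq, Set.mem_Ico, Nat.ceil_le, Nat.lt_ceil, Int.floor_eq_iff,
    mul_inv_le_iff₀ h0, lt_mul_inv_iff₀ h0]
  push_cast
  rfl

theorem tcount_eq_ceil_sub_ceil_s2 (h0 : 0 < x) (k : ℕ) :
    tcount x k = ⌈((k + 1 : ℕ) : ℝ) * x⁻¹⌉₊ - ⌈(k : ℝ) * x⁻¹⌉₊ := by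
  rw [tcount, setOf_floor_mul_eq_Ico h0, Set.ncard_Ico_nat]

theorem rmin_eq_ceil_s2 (h0 : 0 < x) (h1 : x ≤ 1) (k : ℕ) : rmin x k = ⌈(k : ℝ) * x⁻¹⌉₊ := by
  rw [rmin, setOf_floor_mul_eq_Ico h0]
  exact csInf_Ico (strictMono_ceil_mul ((one_le_inv₀ h0).2 h1) k.lt_succ_self)

theorem tcount_eq_rmin_sub_rmin (h0 : 0 < x) (h1 : x ≤ 1) (k : ℕ) :
    tcount x k = rmin x (k + 1) - rmin x k := by
  rw [tcount_eq_ceil_sub_ceil_s2 h0, rmin_eq_ceil_s2 h0 h1, rmin_eq_ceil_s2 h0 h1]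

theorem strictMono_rmin (h0 : 0 < x) (h1 : x ≤ 1) : StrictMono (rmin x) := by
  rw [funext (rmin_eq_ceil_s2 h0 h1)]
  exact strictMono_ceil_mul ((one_le_inv₀ h0).2 h1)

theorem rmin_zero (h0 : 0 < x) (h1 : x ≤ 1) : rmin x 0 = 0 := by
  rw [rmin_eq_ceil_s2 h0 h1, Nat.cast_zero, zero_mul, Nat.ceil_zero]

theorem gc_rmin_floor_mul (h0 : 0 < x) (h1 : x ≤ 1) :
    GaloisConnection (rmin x) fun j : ℕ ↦ ⌊(j : ℝ) * x⌋₊ := by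
  rw [funext (rmin_eq_ceil_s2 h0 h1)]
  exact gc_ceil_mul_inv_floor_mul h0

theorem rmin_one (h0 : 0 < x) (h1 : x ≤ 1) (hy : 0 < gaussMap x) : rmin x 1 = pq x 1 + 1 := by
  have hceil : ⌈gaussMap x⌉₊ = 1 :=
    (Nat.ceil_eq_iff one_ne_zero).2 ⟨by simpa using hy, by simpa using (gaussMap_lt_one x).le⟩
  rw [rmin_eq_ceil_s2 h0 h1, ceil_mul_inv h0.le, Nat.cast_one, one_mul, mul_one, hceil]

theorem tcount_eq_pq_add_one_iff (h0 : 0 < x) (k : ℕ) :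
    tcount x k = pq x 1 + 1 ↔
      ⌈(k : ℝ) * gaussMap x⌉₊ < ⌈((k + 1 : ℕ) : ℝ) * gaussMap x⌉₊ := by
  have hle := ceil_succ_mul_le (gaussMap_nonneg x) (gaussMap_lt_one x).le k
  rw [tcount_eq_ceil_sub_ceil_s2 h0, ceil_mul_inv h0.le, ceil_mul_inv h0.le, mul_add_one]
  omega

theorem kseq_eq_floor (h0 : 0 < x) (hy : 0 < gaussMap x) (j : ℕ) :
    kseq x j = ⌊(j : ℝ) * (gaussMap x)⁻¹⌋₊ :=
  nth_eq_of_strictMono (strictMono_floor_mul ((one_le_inv₀ hy).2 (gaussMap_lt_one x).le))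
    (fun k ↦ (tcount_eq_pq_add_one_iff h0 k).trans <|
      l_lt_l_iff_mem_range_u (gc_ceil_mul_floor_mul_inv hy) (Order.covBy_add_one k)) j

theorem rmin_kseq (h0 : 0 < x) (h1 : x ≤ 1) (hy : 0 < gaussMap x) (j : ℕ) :
    rmin x (kseq x j) = pq x 1 * kseq x j + j := by
  have hinj := (strictMono_floor_mul ((one_le_inv₀ hy).2 (gaussMap_lt_one x).le)).injective
  have hceil : ⌈(kseq x j : ℝ) * gaussMap x⌉₊ = j := by
    rw [kseq_eq_floor h0 hy]
    exact l_u_eq_of_injective (gc_ceil_mul_floor_mul_inv hy) hinj j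
  rw [rmin_eq_ceil_s2 h0 h1, ceil_mul_inv h0.le, hceil]

end FloorFibres

section LargeGaps

variable {x : ℝ}

theorem kseq_succ_sub_kseq (h0 : 0 < x) (hy : 0 < gaussMap x) (j : ℕ) :
    kseq x (j + 1) - kseq x j = pq x 2 +
      (⌊((j + 1 : ℕ) : ℝ) * gaussMap (gaussMap x)⌋₊ - ⌊(j : ℝ) * gaussMap (gaussMap x)⌋₊) := by
  have hmono : ⌊(j : ℝ) * gaussMap (gaussMap x)⌋₊ ≤
      ⌊((j + 1 : ℕ) : ℝ) * gaussMap (gaussMap x)⌋₊ := by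
    have hz := gaussMap_nonneg (gaussMap x)
    gcongr
    exact j.le_succ
  rw [kseq_eq_floor h0 hy, kseq_eq_floor h0 hy, floor_mul_inv hy.le, floor_mul_inv hy.le,
    show pq x 2 = pq (gaussMap x) 1 from pq_succ x 1, mul_add_one]
  omega

theorem gseq_succ (h0 : 0 < x) (h1 : x ≤ 1) (hy : 0 < gaussMap x) (j : ℕ) :
    gseq x (j + 1) = pq x 1 * (kseq x (j + 1) - kseq x j) + 1 := by
  have hmono : kseq x j ≤ kseq x (j + 1) := by
    rw [kseq_eq_floor h0 hy, kseq_eq_floor h0 hy]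
    gcongr
    exact j.le_succ
  have hmul := Nat.mul_le_mul_left (pq x 1) hmono
  rw [gseq, Nat.add_sub_cancel, rmin_kseq h0 h1 hy, rmin_kseq h0 h1 hy, Nat.mul_sub]
  omega

theorem gseq_succ_eq_iff (h0 : 0 < x) (h1 : x ≤ 1) (hy : 0 < gaussMap x) (j : ℕ) :
    gseq x (j + 1) = qden x 2 + qden x 1 ↔
      ⌊(j : ℝ) * gaussMap (gaussMap x)⌋₊ < ⌊((j + 1 : ℕ) : ℝ) * gaussMap (gaussMap x)⌋₊ := by
  have hle := floor_succ_mul_le (gaussMap_nonneg (gaussMap x)) (gaussMap_lt_one _).le j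
  have hq : qden x 2 + qden x 1 = pq x 1 * (pq x 2 + 1) + 1 := by
    simp only [qden]
    ring
  rw [gseq_succ h0 h1 hy, hq, Nat.add_right_cancel_iff,
    Nat.mul_right_inj (pq_one_pos h0 h1).ne', kseq_succ_sub_kseq h0 hy]
  omega

theorem one_le_and_gseq_eq_iff_mem_range (h0 : 0 < x) (h1 : x ≤ 1) (hz : 0 < gaussMap (gaussMap x))
    (j : ℕ) :
    1 ≤ j ∧ gseq x j = qden x 2 + qden x 1 ↔
      j ∈ Set.range fun h : ℕ ↦ rmin (gaussMap (gaussMap x)) (h + 1) := by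
  have hz1 := (gaussMap_lt_one (gaussMap x)).le
  rw [Set.mem_range]
  cases j with
  | zero =>
    have hpos (h : ℕ) : rmin (gaussMap (gaussMap x)) (h + 1) ≠ 0 :=
      (strictMono_rmin hz hz1 h.succ_pos).ne_bot
    exact ⟨fun h ↦ absurd h.1 (Nat.not_succ_le_zero 0), fun ⟨h, hh⟩ ↦ absurd hh (hpos h)⟩
  | succ j =>
    rw [and_iff_right (Nat.le_add_left 1 j),
      gseq_succ_eq_iff h0 h1 (pos_of_gaussMap_pos (gaussMap_nonneg x) hz),
      u_lt_u_iff_mem_range_l (gc_rmin_floor_mul hz hz1) (Order.covBy_add_one j),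
      Set.mem_range, ← Nat.or_exists_add_one, rmin_zero hz hz1,
      or_iff_right (Nat.zero_ne_add_one j)]

theorem jbig_eq_rmin (h0 : 0 < x) (h1 : x ≤ 1) (hz : 0 < gaussMap (gaussMap x)) (h : ℕ) :
    jbig x h = rmin (gaussMap (gaussMap x)) (h + 1) :=
  nth_eq_of_strictMono
    ((strictMono_rmin hz (gaussMap_lt_one _).le).comp (strictMono_id.add_const 1))
    (one_le_and_gseq_eq_iff_mem_range h0 h1 hz) h

end LargeGaps

-- For rational `α`, `hm` says that the expansion `[a_1, a_2, …]` does not stop before `a_{m+4}`.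
theorem jbig_eq_general {α : ℝ} (h0 : 0 < α) (h1 : α < 1) {m : ℕ}
    (hm : gaussIter α (m + 3) ≠ 0) :
    jbig (gaussIter α m) 0 = pq α (m + 3) + 1 ∧
    ∀ h : ℕ, 1 ≤ h →
      jbig (gaussIter α m) h - jbig (gaussIter α m) (h - 1)
        = tcount (gaussIter α (m + 2)) h := by
  have hpos {n : ℕ} (hn : n ≤ m + 3) : 0 < gaussIter α n := gaussIter_pos_of_le h0.le hm hn
  have hz0 : 0 < gaussIter α (m + 2) := hpos (by omega)
  have hz1 : gaussIter α (m + 2) ≤ 1 := (gaussIter_lt_one h1 _).le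
  have hjbig (h : ℕ) : jbig (gaussIter α m) h = rmin (gaussIter α (m + 2)) (h + 1) := by
    rw [gaussIter_succ, gaussIter_succ] at hz0 ⊢
    exact jbig_eq_rmin (hpos (by omega)) (gaussIter_lt_one h1 m).le hz0 h
  constructor
  · rw [hjbig, zero_add, pq_succ]
    exact rmin_one hz0 hz1 (gaussIter_succ α (m + 2) ▸ hpos le_rfl)
  · intro h hh
    rw [hjbig, hjbig, Nat.sub_add_cancel hh, tcount_eq_rmin_sub_rmin hz0 hz1]

/-- with `(j_h^{(m)})` the increasing enumeration of the `j ≥ 1` with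
`g_j^{(m)} = q_2^{(m)} + q_1^{(m)}`, one has `j_0^{(m)} = a_{m+3} + 1` and
`j_h^{(m)} - j_{h-1}^{(m)} = t_h^{(m+2)}` for all `h ≥ 1`. -/
theorem jbig_eq (α : ℝ) (hirr : Irrational α) (h0 : 0 < α) (h1 : α < 1) (m : ℕ) :
    jbig (gaussIter α m) 0 = pq α (m + 3) + 1 ∧
    ∀ h : ℕ, 1 ≤ h →
      jbig (gaussIter α m) h - jbig (gaussIter α m) (h - 1)
        = tcount (gaussIter α (m + 2)) h :=
  jbig_eq_general h0 h1 (irrational_gaussIter hirr (m + 3)).ne_zero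
end
end

section
/- Let α ∈ (0,1) be irrational. For all β ∈ [0, 1/2) and all n ≥ 1, S_{n−1}(α, β) = S_{n−1}(α) + R_{n−1}(α, β), where R_{n−1}(α, β) = 2[ d_n(α, 1/2 − β) − d_n(α, 1 − β) − d_n(α, 1/2) ]. -/
open Filter Finset

noncomputable section

/-!
For `0 ≤ β ≤ c ≤ 1`, the point `{x + β}` lies in `[0, c)` exactly when `{x}` lies in `[0, c - β)`
or in the wrapped-around arc `[1 - β, 1)`. Summing over the orbit writes `S_n(α, β)` as twice the
difference of two discrepancies of the unshifted orbit. At `β = 0` the second of them is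
`d_{n+1}(α, 1) = 0`, so `S_n(α) = 2 d_{n+1}(α, 1/2)`, which the last term of `R` cancels.
-/

lemma fract_add_lt_iff {R : Type*} [CommRing R] [LinearOrder R] [IsStrictOrderedRing R]
    [FloorRing R] {x β c : R} (hβ : 0 ≤ β) (hβc : β ≤ c) (hc : c ≤ 1) :
    Int.fract (x + β) < c ↔ Int.fract x < c - β ∨ 1 - β ≤ Int.fract x := by
  have hx_nonneg := Int.fract_nonneg x
  have hx_lt_one := Int.fract_lt_one x
  have hx := Int.floor_add_fract x
  rcases lt_or_ge (Int.fract x) (1 - β) with hlt | hge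
  · have hfract : Int.fract (x + β) = Int.fract x + β :=
      Int.fract_eq_iff.2 ⟨by linarith, by linarith, ⌊x⌋, by linarith⟩
    rw [hfract, or_iff_left hlt.not_ge, lt_sub_iff_add_lt]
  · have hfract : Int.fract (x + β) = Int.fract x + β - 1 :=
      Int.fract_eq_iff.2 ⟨by linarith, by linarith, ⌊x⌋ + 1, by push_cast; linarith⟩
    exact iff_of_true (by linarith) (Or.inr hge)

/-- The 1-periodic indicator `χ_{[0,c)}({x})` of an arc starting at `0`, in terms of which both
`sfun` and `ddisc` are expressed. -/
def fractIndicator (c x : ℝ) : ℝ := if Int.fract x < c then 1 else 0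

lemma fractIndicator_add {β c : ℝ} (hβ : 0 ≤ β) (hβc : β ≤ c) (hc : c ≤ 1) (x : ℝ) :
    fractIndicator c (x + β) = fractIndicator (c - β) x - fractIndicator (1 - β) x + 1 := by
  rcases lt_or_ge (Int.fract x) (c - β) with hlow | hlow
  · have hunwrapped : Int.fract x < 1 - β := by linarith
    simp [fractIndicator, fract_add_lt_iff hβ hβc hc, hlow, hunwrapped]
  · by_cases hunwrapped : Int.fract x < 1 - β <;>
      simp [fractIndicator, fract_add_lt_iff hβ hβc hc, hlow.not_gt, ← not_lt, hunwrapped]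

lemma sfun_eq_two_mul_fractIndicator_sub_one (y : ℝ) :
    sfun y = 2 * fractIndicator (1 / 2) y - 1 := by
  unfold sfun fractIndicator
  split_ifs <;> norm_num

lemma ddisc_eq_sum_fractIndicator_sub (α c : ℝ) (n : ℕ) :
    ddisc α c n = ∑ r ∈ range n, fractIndicator c (r * α) - c * n :=
  rfl

lemma ddisc_one (α : ℝ) (n : ℕ) : ddisc α 1 n = 0 := by
  simp [ddisc, Int.fract_lt_one]

lemma sum_fractIndicator_add_sub (α : ℝ) {β c : ℝ} (hβ : 0 ≤ β) (hβc : β ≤ c) (hc : c ≤ 1)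
    (n : ℕ) :
    ∑ r ∈ range n, fractIndicator c (r * α + β) - c * n =
      ddisc α (c - β) n - ddisc α (1 - β) n := by
  simp only [fractIndicator_add hβ hβc hc, ddisc_eq_sum_fractIndicator_sub, sum_add_distrib,
    sum_sub_distrib, sum_const, card_range, nsmul_eq_mul]
  ring

lemma Sgen_eq_two_mul_ddisc_sub_ddisc (α : ℝ) {β : ℝ} (hβ : β ∈ Set.Icc (0 : ℝ) (1 / 2))
    (n : ℕ) :
    Sgen α β n = 2 * (ddisc α (1 / 2 - β) (n + 1) - ddisc α (1 - β) (n + 1)) := by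
  rw [← sum_fractIndicator_add_sub α hβ.1 hβ.2 (by norm_num)]
  simp only [Sgen, sfun_eq_two_mul_fractIndicator_sub_one, sum_sub_distrib, ← mul_sum, sum_const,
    card_range, nsmul_eq_mul]
  ring

lemma Ssum_eq_two_mul_ddisc (α : ℝ) (n : ℕ) : Ssum α n = 2 * ddisc α (1 / 2) (n + 1) := by
  rw [Ssum, Sgen_eq_two_mul_ddisc_sub_ddisc α (by norm_num), sub_zero, sub_zero, ddisc_one,
    sub_zero]

theorem Sgen_decomp_general (α : ℝ) {β : ℝ} (hβ : β ∈ Set.Icc (0 : ℝ) (1 / 2)) (n : ℕ) :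
    Sgen α β n = Ssum α n
      + 2 * (ddisc α (1 / 2 - β) (n + 1) - ddisc α (1 - β) (n + 1) - ddisc α (1 / 2) (n + 1)) := by
  rw [Sgen_eq_two_mul_ddisc_sub_ddisc α hβ, Ssum_eq_two_mul_ddisc]
  ring

/-- for all `β ∈ [0, 1/2)` and `n ≥ 1`,
`S_{n-1}(α, β) = S_{n-1}(α) + 2[d_n(α, 1/2 - β) - d_n(α, 1 - β) - d_n(α, 1/2)]`. -/
theorem Sgen_decomp (α : ℝ) (hirr : Irrational α) (h0 : 0 < α) (h1 : α < 1)
    (β : ℝ) (hβ : β ∈ Set.Ico (0 : ℝ) (1 / 2)) (n : ℕ) (hn : 1 ≤ n) :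
    Sgen α β (n - 1) = Ssum α (n - 1)
      + 2 * (ddisc α (1 / 2 - β) n - ddisc α (1 - β) n - ddisc α (1 / 2) n) := by
  obtain ⟨m, rfl⟩ := Nat.exists_eq_add_of_le' hn
  exact Sgen_decomp_general α (Set.Ico_subset_Icc_self hβ) m
end
end
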